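/- arXiv:1911.02140 — 3 statements merged into one kernel-verified Lean document; each statement's English description precedes it below -/
import Mathlib

section
/- Let F : ℝ → ℝ be continuous and monotone non-decreasing, and let a < b be real numbers with midpoint m = (a + b)/2. Then for every real number c, ∫_a^b |F(ω) − F(m)| dω ≤ ∫_a^b |F(ω) − c| dω; i.e., the value F(m) at the midpoint minimizes c ↦ ∫_a^b |F(ω) − c| dω. -/
/-!
Every median of an integrable function is a best constant approximation to it in `L¹`: moving the
constant from a median `m` up to `c` raises the error by exactly `c - m` on `{f ≤ m}` and lowers it
by at most `c - m` on `{m < f}`, and the latter set is no larger than the former; moving it down is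
symmetric. Monotone maps carry medians to medians, and the midpoint is a median of Lebesgue measure
on an interval.
-/

open MeasureTheory Set

section Median

variable {Ω α β : Type*} [MeasurableSpace Ω] {μ : Measure Ω}

/-- `m` is a median of `X` with respect to `μ`; this is what makes `m` `L¹`-optimal.
For a probability measure the usual definition asks that `{X ≤ m}` and `{m ≤ X}` have measure at
least `1 / 2`; comparing each with its complement says the same and needs no normalization. -/
structure IsMedian [LinearOrder α] (μ : Measure Ω) (X : Ω → α) (m : α) : Prop where
  measure_lt_le : μ {ω | X ω < m} ≤ μ {ω | m ≤ X ω}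
  measure_gt_le : μ {ω | m < X ω} ≤ μ {ω | X ω ≤ m}

theorem IsMedian.comp_monotoneOn [LinearOrder α] [LinearOrder β] {X : Ω → α} {f : α → β}
    {s : Set α} {m : α} (hX : IsMedian μ X m) (hf : MonotoneOn f s) (hXs : ∀ᵐ ω ∂μ, X ω ∈ s)
    (hm : m ∈ s) : IsMedian μ (f ∘ X) (f m) where
  measure_lt_le := calc
    μ {ω | f (X ω) < f m} ≤ μ {ω | X ω < m} :=
      measure_mono_ae <| hXs.mono fun _ hω hlt ↦ hf.reflect_lt hω hm hlt
    _ ≤ μ {ω | m ≤ X ω} := hX.measure_lt_le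
    _ ≤ μ {ω | f m ≤ f (X ω)} := measure_mono_ae <| hXs.mono fun _ hω hle ↦ hf hm hω hle
  measure_gt_le := calc
    μ {ω | f m < f (X ω)} ≤ μ {ω | m < X ω} :=
      measure_mono_ae <| hXs.mono fun _ hω hlt ↦ hf.reflect_lt hm hω hlt
    _ ≤ μ {ω | X ω ≤ m} := hX.measure_gt_le
    _ ≤ μ {ω | f (X ω) ≤ f m} := measure_mono_ae <| hXs.mono fun _ hω hle ↦ hf hω hm hle

variable {f : Ω → ℝ} {m c : ℝ}

theorem mul_measureReal_le_setIntegral₀ {s : Set Ω} (hs : NullMeasurableSet s μ) (hμs : μ s ≠ ⊤)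
    (hf : ∀ ω ∈ s, c ≤ f ω) (hint : IntegrableOn f s μ) : c * μ.real s ≤ ∫ ω in s, f ω ∂μ := calc
  c * μ.real s = ∫ _ in s, c ∂μ := by rw [setIntegral_const, smul_eq_mul, mul_comm]
  _ ≤ ∫ ω in s, f ω ∂μ :=
    setIntegral_mono_on_ae₀ (integrableOn_const hμs) hint hs (.of_forall hf)

variable [IsFiniteMeasure μ]

theorem integral_abs_sub_le_of_measure_gt_le (hf : Integrable f μ)
    (hm : μ {ω | m < f ω} ≤ μ {ω | f ω ≤ m}) (hmc : m ≤ c) :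
    ∫ ω, |f ω - m| ∂μ ≤ ∫ ω, |f ω - c| ∂μ := by
  set A := {ω | f ω ≤ m}
  have hA : NullMeasurableSet A μ := nullMeasurableSet_le hf.aemeasurable aemeasurable_const
  have hAc : Aᶜ = {ω | m < f ω} := by ext; simp [A]
  have hint (d : ℝ) : Integrable (fun ω ↦ |f ω - d|) μ := (hf.sub (integrable_const d)).abs
  have hincr : Integrable (fun ω ↦ |f ω - c| - |f ω - m|) μ := (hint c).sub (hint m)
  have hmeas : μ.real Aᶜ ≤ μ.real A := by
    rw [hAc]
    exact ENNReal.toReal_mono (measure_ne_top μ A) hm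
  have hincr_le : (c - m) * μ.real A ≤ ∫ ω in A, (|f ω - c| - |f ω - m|) ∂μ := by
    refine mul_measureReal_le_setIntegral₀ hA (measure_ne_top μ A) (fun ω hω ↦ ?_)
      hincr.integrableOn
    have hle : f ω ≤ m := hω
    rw [abs_of_nonpos (sub_nonpos.2 hle)]
    linarith [neg_abs_le (f ω - c)]
  have hincr_gt : -(c - m) * μ.real Aᶜ ≤ ∫ ω in Aᶜ, (|f ω - c| - |f ω - m|) ∂μ := by
    refine mul_measureReal_le_setIntegral₀ hA.compl (measure_ne_top μ Aᶜ) (fun ω _ ↦ ?_)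
      hincr.integrableOn
    have htriangle : |f ω - m| ≤ |f ω - c| + |c - m| := abs_sub_le (f ω) c m
    rw [abs_of_nonneg (sub_nonneg.2 hmc)] at htriangle
    linarith
  rw [← sub_nonneg, ← integral_sub (hint c) (hint m), ← integral_add_compl₀ hA hincr]
  linarith [mul_le_mul_of_nonneg_left hmeas (sub_nonneg.2 hmc)]

theorem IsMedian.integral_abs_sub_le (hm : IsMedian μ f m) (hf : Integrable f μ) (c : ℝ) :
    ∫ ω, |f ω - m| ∂μ ≤ ∫ ω, |f ω - c| ∂μ := by
  rcases le_total m c with hmc | hcm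
  · exact integral_abs_sub_le_of_measure_gt_le hf hm.measure_gt_le hmc
  · have hneg (d : ℝ) : ∫ ω, |(-f) ω - -d| ∂μ = ∫ ω, |f ω - d| ∂μ := by
      simp only [Pi.neg_apply, neg_sub_neg, abs_sub_comm]
    rw [← hneg m, ← hneg c]
    refine integral_abs_sub_le_of_measure_gt_le hf.neg ?_ (neg_le_neg hcm)
    simpa only [Pi.neg_apply, neg_lt_neg_iff, neg_le_neg_iff] using hm.measure_lt_le

end Median

theorem isMedian_id_midpoint (a b : ℝ) :
    IsMedian (volume.restrict (Ioc a b)) id ((a + b) / 2) := by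
  set m := (a + b) / 2 with hm
  have hhalf : volume (Ioc a m) = volume (Ioc m b) := by
    rw [Real.volume_Ioc, Real.volume_Ioc, show m - a = b - m by linarith]
  constructor
  · rw [Measure.restrict_apply' measurableSet_Ioc, Measure.restrict_apply' measurableSet_Ioc]
    calc
      volume ({x | x < m} ∩ Ioc a b) ≤ volume (Ioc a m) :=
        measure_mono fun _ ⟨hxm, hx⟩ ↦ ⟨hx.1, hxm.le⟩
      _ = volume (Ioc m b) := hhalf
      _ ≤ volume ({x | m ≤ x} ∩ Ioc a b) :=
        measure_mono fun _ ⟨hmx, hxb⟩ ↦ ⟨hmx.le, by linarith, hxb⟩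
  · rw [Measure.restrict_apply' measurableSet_Ioc, Measure.restrict_apply' measurableSet_Ioc]
    calc
      volume ({x | m < x} ∩ Ioc a b) ≤ volume (Ioc m b) :=
        measure_mono fun _ ⟨hmx, hx⟩ ↦ ⟨hmx, hx.2⟩
      _ = volume (Ioc a m) := hhalf.symm
      _ ≤ volume ({x | x ≤ m} ∩ Ioc a b) :=
        measure_mono fun _ ⟨hax, hxm⟩ ↦ ⟨hxm, hax, by linarith⟩

theorem midpoint_value_minimizes_abs_integral_general {F : ℝ → ℝ} {a b : ℝ}
    (hF : MonotoneOn F (Icc a b)) (hab : a ≤ b) (c : ℝ) :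
    (∫ ω in a..b, |F ω - F ((a + b) / 2)|) ≤ ∫ ω in a..b, |F ω - c| := by
  have hmedian : IsMedian (volume.restrict (Ioc a b)) F (F ((a + b) / 2)) :=
    (isMedian_id_midpoint a b).comp_monotoneOn hF
      ((ae_restrict_mem measurableSet_Ioc).mono fun _ hω ↦ Ioc_subset_Icc_self hω)
      ⟨by linarith, by linarith⟩
  have hint : IntegrableOn F (Ioc a b) :=
    (hF.integrableOn_isCompact isCompact_Icc).mono_set Ioc_subset_Icc_self
  simpa only [intervalIntegral.integral_of_le hab] using hmedian.integral_abs_sub_le hint c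

/-- For a continuous, monotone non-decreasing `F : ℝ → ℝ` and `a < b` with
midpoint `m = (a + b)/2`, the value `F m` minimizes `c ↦ ∫ ω in a..b, |F ω - c|`. -/
theorem midpoint_value_minimizes_abs_integral
    (F : ℝ → ℝ) (hF : Continuous F) (hmono : Monotone F)
    (a b : ℝ) (hab : a < b) (c : ℝ) :
    (∫ ω in a..b, |F ω - F ((a + b) / 2)|) ≤ ∫ ω in a..b, |F ω - c| :=
  midpoint_value_minimizes_abs_integral_general (hmono.monotoneOn _) hab.le c
end

section
/- Let F : ℝ → ℝ be continuous and monotone non-decreasing, and let a be a real number. Define g(t) = ∫_a^t |F(ω) − F((a + t)/2)| dω for t > a. Then for every t > a, g is differentiable at t with derivative g'(t) = F(t) − F((a + t)/2). -/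
open MeasureTheory Set Filter Topology

/-!
The midpoint `m` of `[a, t]` is where `F - F m` changes sign, and the two halves of the interval
have equal length, so the constants `F m` cancel and the error is `∫ a..t, F - 2 * ∫ a..m, F`.
As `m` moves at half the speed of `t`, this has derivative `F t - F m`.
-/

theorem hasDerivAt_integral_of_mem_Ioo {E : Type*} [NormedAddCommGroup E] [NormedSpace ℝ E]
    [CompleteSpace E] {f : ℝ → E} {a b x : ℝ} (hf : IntervalIntegrable f volume a b)
    (hx : x ∈ Ioo a b) (hfx : ContinuousAt f x) :
    HasDerivAt (fun u => ∫ ω in a..u, f ω) (f x) x := by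
  have hax : IntervalIntegrable f volume a x :=
    hf.mono_set (uIcc_subset_uIcc_left (Icc_subset_uIcc (Ioo_subset_Icc_self hx)))
  have hmeas : StronglyMeasurableAtFilter f (𝓝 x) :=
    ⟨Ioc a b, Ioc_mem_nhds hx.1 hx.2, hf.aestronglyMeasurable⟩
  exact intervalIntegral.integral_hasDerivAt_right hax hmeas hfx

section MonotoneOn

variable {F : ℝ → ℝ} {a b : ℝ}

theorem intervalIntegrable_of_monotoneOn_Icc {u v : ℝ} (hF : MonotoneOn F (Icc a b))
    (hu : u ∈ Icc a b) (hv : v ∈ Icc a b) : IntervalIntegrable F volume u v :=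
  (hF.mono (uIcc_subset_Icc hu hv)).intervalIntegrable

theorem integral_abs_sub_apply_of_monotoneOn {c : ℝ} (hF : MonotoneOn F (Icc a b))
    (hc : c ∈ Icc a b) :
    ∫ ω in a..b, |F ω - F c| = (∫ ω in a..c, (F c - F ω)) + ∫ ω in c..b, (F ω - F c) := by
  have hab : a ≤ b := hc.1.trans hc.2
  have hint {u v : ℝ} (hu : u ∈ Icc a b) (hv : v ∈ Icc a b) :
      IntervalIntegrable (fun ω => |F ω - F c|) volume u v :=
    ((intervalIntegrable_of_monotoneOn_Icc hF hu hv).sub intervalIntegrable_const).abs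
  have hleft : ∫ ω in a..c, |F ω - F c| = ∫ ω in a..c, (F c - F ω) := by
    refine intervalIntegral.integral_congr fun ω hω => ?_
    rw [uIcc_of_le hc.1] at hω
    have hle : F ω ≤ F c := hF ⟨hω.1, hω.2.trans hc.2⟩ hc hω.2
    exact (abs_of_nonpos (sub_nonpos.2 hle)).trans (neg_sub _ _)
  have hright : ∫ ω in c..b, |F ω - F c| = ∫ ω in c..b, (F ω - F c) := by
    refine intervalIntegral.integral_congr fun ω hω => ?_
    rw [uIcc_of_le hc.2] at hω
    have hle : F c ≤ F ω := hF hc ⟨hc.1.trans hω.1, hω.2⟩ hω.1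
    exact abs_of_nonneg (sub_nonneg.2 hle)
  rw [← hleft, ← hright, intervalIntegral.integral_add_adjacent_intervals
    (hint (left_mem_Icc.2 hab) hc) (hint hc (right_mem_Icc.2 hab))]

theorem integral_abs_sub_midpoint_of_monotoneOn (hab : a ≤ b) (hF : MonotoneOn F (Icc a b)) :
    ∫ ω in a..b, |F ω - F ((a + b) / 2)| =
      (∫ ω in a..b, F ω) - 2 * ∫ ω in a..((a + b) / 2), F ω := by
  set m := (a + b) / 2 with hm_def
  have hm : m ∈ Icc a b := ⟨by linarith, by linarith⟩
  have ham := intervalIntegrable_of_monotoneOn_Icc hF (left_mem_Icc.2 hab) hm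
  have hmb := intervalIntegrable_of_monotoneOn_Icc hF hm (right_mem_Icc.2 hab)
  have hhalves : b - m = m - a := by linarith
  calc ∫ ω in a..b, |F ω - F m|
      = (∫ ω in a..m, (F m - F ω)) + ∫ ω in m..b, (F ω - F m) :=
        integral_abs_sub_apply_of_monotoneOn hF hm
    _ = (∫ ω in m..b, F ω) - ∫ ω in a..m, F ω := by
        rw [intervalIntegral.integral_sub intervalIntegrable_const ham,
          intervalIntegral.integral_sub hmb intervalIntegrable_const,
          intervalIntegral.integral_const, intervalIntegral.integral_const, hhalves]
        ring
    _ = (∫ ω in a..b, F ω) - 2 * ∫ ω in a..m, F ω := by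
        rw [← intervalIntegral.integral_add_adjacent_intervals ham hmb]
        ring

theorem hasDerivAt_wasserstein_piece_upper_endpoint_general {t : ℝ}
    (hF : MonotoneOn F (Icc a b)) (ht : t ∈ Ioo a b) (hFt : ContinuousAt F t)
    (hFm : ContinuousAt F ((a + t) / 2)) :
    HasDerivAt (fun s : ℝ => ∫ ω in a..s, |F ω - F ((a + s) / 2)|)
      (F t - F ((a + t) / 2)) t := by
  obtain ⟨hat, htb⟩ := ht
  have hab : a ≤ b := (hat.trans htb).le
  have hint := intervalIntegrable_of_monotoneOn_Icc hF (left_mem_Icc.2 hab) (right_mem_Icc.2 hab)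
  have hm : (a + t) / 2 ∈ Ioo a b := ⟨by linarith, by linarith⟩
  have hmidpoint : HasDerivAt (fun s : ℝ => (a + s) / 2) (1 / 2) t :=
    ((hasDerivAt_id t).const_add a).div_const 2
  have hhalf : HasDerivAt (fun s : ℝ => ∫ ω in a..((a + s) / 2), F ω)
      (F ((a + t) / 2) * (1 / 2)) t :=
    HasDerivAt.comp (h₂ := fun u => ∫ ω in a..u, F ω) t
      (hasDerivAt_integral_of_mem_Ioo hint hm hFm) hmidpoint
  have hderiv : HasDerivAt
      (fun s : ℝ => (∫ ω in a..s, F ω) - 2 * ∫ ω in a..((a + s) / 2), F ω)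
      (F t - F ((a + t) / 2)) t :=
    ((hasDerivAt_integral_of_mem_Ioo hint ⟨hat, htb⟩ hFt).sub (hhalf.const_mul 2)).congr_deriv
      (by ring)
  refine hderiv.congr_of_eventuallyEq ?_
  filter_upwards [Ioo_mem_nhds hat htb] with s hs
  exact integral_abs_sub_midpoint_of_monotoneOn hs.1.le (hF.mono (Icc_subset_Icc_right hs.2.le))

end MonotoneOn

/-- For a continuous, monotone non-decreasing `F : ℝ → ℝ` and a real `a`,
the function `g t = ∫ ω in a..t, |F ω - F ((a + t)/2)|` is differentiable at every `t > a`,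
with derivative `F t - F ((a + t)/2)`. -/
theorem hasDerivAt_wasserstein_piece_upper_endpoint
    (F : ℝ → ℝ) (hF : Continuous F) (hmono : Monotone F)
    (a t : ℝ) (ht : a < t) :
    HasDerivAt (fun s : ℝ => ∫ ω in a..s, |F ω - F ((a + s) / 2)|)
      (F t - F ((a + t) / 2)) t :=
  hasDerivAt_wasserstein_piece_upper_endpoint_general (hmono.monotoneOn (Icc a (t + 1)))
    ⟨ht, lt_add_one t⟩ hF.continuousAt hF.continuousAt
end

section
/- Let F : ℝ → ℝ be continuous and monotone non-decreasing, let N ≥ 2, and define W₁(τ₁, ..., τ_{N-1}) = Σ_{i=0}^{N-1} ∫_{τ_i}^{τ_{i+1}} |F(ω) − F((τ_i + τ_{i+1})/2)| dω with τ₀ = 0 and τ_N = 1. If τ* = (τ₁*, ..., τ_{N-1}*) with 0 < τ₁* < ... < τ_{N-1}* < 1 is a local minimum of W₁, then for every i with 1 ≤ i ≤ N−1, 2F(τ_i*) = F((τ_{i-1}* + τ_i*)/2) + F((τ_i* + τ_{i+1}*)/2). -/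
/-!
On a cell `[a, b]` with midpoint `m`, monotonicity fixes the sign of `F - F m` on each half, and the
contributions of the constant `F m` cancel because the halves have equal length. The cell error is
thus `∫ m..b F - ∫ a..m F`, with no absolute value left, and by the fundamental theorem of calculus
its derivative in either endpoint `x` is `F x - F m`. A fraction is an endpoint of exactly two
cells, so at a local extremum the two expressions `F x - F m` add up to zero.
-/

open Set Function MeasureTheory Topology

/-- The contribution of one cell `[a, b]` to `W₁`: the `L¹` distance on `[a, b]` between a quantile
function `F` and its value at the midpoint of the cell. -/
noncomputable def cellError (F : ℝ → ℝ) (a b : ℝ) : ℝ :=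
  ∫ ω in a..b, |F ω - F ((a + b) / 2)|

/-- The `1`-Wasserstein error `W₁` of approximating the quantile function `F` by its midpoint values
on the `N` cells cut out by the fractions `t 0, …, t N`; later values of `t` are irrelevant. -/
noncomputable def wassersteinError (F : ℝ → ℝ) (N : ℕ) (t : ℕ → ℝ) : ℝ :=
  ∑ j ∈ Finset.range N, cellError F (t j) (t (j + 1))

/-- The sequence of fractions with interior values taken from `σ` and with the values at `0` and `N`
held fixed at `a` and `b`, so that `W₁` becomes a function of the interior fractions alone. -/
def pinEndpoints {α : Type*} (N : ℕ) (a b : α) (σ : ℕ → α) : ℕ → α :=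
  fun k => if k = 0 then a else if k = N then b else σ k

section CellError

variable {F : ℝ → ℝ} {a b l m p u x : ℝ}

theorem integral_abs_sub_of_monotoneOn (hF : MonotoneOn F (Icc a b)) (hm : m ∈ Icc a b) :
    ∫ ω in a..b, |F ω - F m| =
      (∫ ω in m..b, F ω) - (∫ ω in a..m, F ω) + (2 * m - a - b) * F m := by
  have left_int : IntervalIntegrable F volume a m :=
    (hF.mono (uIcc_of_le hm.1 ▸ Icc_subset_Icc_right hm.2)).intervalIntegrable
  have right_int : IntervalIntegrable F volume m b :=
    (hF.mono (uIcc_of_le hm.2 ▸ Icc_subset_Icc_left hm.1)).intervalIntegrable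
  have left_eq : ∫ ω in a..m, |F ω - F m| = ∫ ω in a..m, (F m - F ω) := by
    refine intervalIntegral.integral_congr fun ω hω => ?_
    rw [uIcc_of_le hm.1] at hω
    exact (abs_sub_comm _ _).trans
      (abs_of_nonneg (sub_nonneg.2 (hF ⟨hω.1, hω.2.trans hm.2⟩ hm hω.2)))
  have right_eq : ∫ ω in m..b, |F ω - F m| = ∫ ω in m..b, (F ω - F m) := by
    refine intervalIntegral.integral_congr fun ω hω => ?_
    rw [uIcc_of_le hm.2] at hω
    exact abs_of_nonneg (sub_nonneg.2 (hF hm ⟨hm.1.trans hω.1, hω.2⟩ hω.1))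
  rw [← intervalIntegral.integral_add_adjacent_intervals
      (left_int.sub intervalIntegrable_const).abs (right_int.sub intervalIntegrable_const).abs,
    left_eq, right_eq, intervalIntegral.integral_sub intervalIntegrable_const left_int,
    intervalIntegral.integral_sub right_int intervalIntegrable_const]
  simp only [intervalIntegral.integral_const, smul_eq_mul]
  ring

theorem cellError_eq_primitive (hF : MonotoneOn F (Icc l u)) (ha : a ∈ Icc l u) (hb : b ∈ Icc l u)
    (hab : a ≤ b) :
    cellError F a b =
      (∫ ω in l..a, F ω) + (∫ ω in l..b, F ω) - 2 * ∫ ω in l..((a + b) / 2), F ω := by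
  have hl : l ∈ Icc l u := left_mem_Icc.2 (ha.1.trans ha.2)
  have hm : (a + b) / 2 ∈ Icc a b := ⟨by linarith, by linarith⟩
  have integrable {v : ℝ} (hv : v ∈ Icc l u) : IntervalIntegrable F volume l v :=
    (hF.mono (uIcc_subset_Icc hl hv)).intervalIntegrable
  have integrable_mid := integrable (Icc_subset_Icc ha.1 hb.2 hm)
  rw [cellError, integral_abs_sub_of_monotoneOn (hF.mono (Icc_subset_Icc ha.1 hb.2)) hm,
    ← intervalIntegral.integral_interval_sub_left (integrable hb) integrable_mid,
    ← intervalIntegral.integral_interval_sub_left integrable_mid (integrable ha)]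
  ring

theorem hasDerivAt_integral_of_monotoneOn (hF : MonotoneOn F (Icc l u)) (hx : x ∈ Ioo l u)
    (hcont : ContinuousAt F x) : HasDerivAt (fun y => ∫ ω in l..y, F ω) (F x) x := by
  have integrable : IntervalIntegrable F volume l x :=
    (hF.mono (uIcc_of_le hx.1.le ▸ Icc_subset_Icc_right hx.2.le)).intervalIntegrable
  have measurable_near : StronglyMeasurableAtFilter F (𝓝 x) volume :=
    ⟨Icc l u, Icc_mem_nhds hx.1 hx.2,
      (aemeasurable_restrict_of_monotoneOn measurableSet_Icc hF).aestronglyMeasurable⟩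
  exact intervalIntegral.integral_hasDerivAt_right integrable measurable_near hcont

theorem hasDerivAt_primitive_sub_two_mul_midpoint (hF : MonotoneOn F (Icc l u)) (hp : p ∈ Icc l u)
    (hx : x ∈ Ioo l u) (hcont : ContinuousAt F x) (hmid : ContinuousAt F ((p + x) / 2)) :
    HasDerivAt (fun y => (∫ ω in l..p, F ω) + (∫ ω in l..y, F ω) - 2 * ∫ ω in l..((p + y) / 2), F ω)
      (F x - F ((p + x) / 2)) x := by
  have mid_mem : (p + x) / 2 ∈ Ioo l u := ⟨by linarith [hp.1, hx.1], by linarith [hp.2, hx.2]⟩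
  have midpoint_deriv : HasDerivAt (fun y : ℝ => (p + y) / 2) (1 / 2) x :=
    ((hasDerivAt_id x).const_add p).div_const 2
  have primitive_midpoint_deriv :=
    (hasDerivAt_integral_of_monotoneOn hF mid_mem hmid).comp x midpoint_deriv
  exact (((hasDerivAt_integral_of_monotoneOn hF hx hcont).const_add _).sub
    (primitive_midpoint_deriv.const_mul 2)).congr_deriv (by ring)

theorem hasDerivAt_cellError_right (hF : MonotoneOn F (Icc l u)) (ha : l ≤ a) (hab : a < b)
    (hb : b < u) (hcont : ContinuousAt F b) (hmid : ContinuousAt F ((a + b) / 2)) :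
    HasDerivAt (fun x => cellError F a x) (F b - F ((a + b) / 2)) b := by
  have a_mem : a ∈ Icc l u := ⟨ha, (hab.trans hb).le⟩
  refine (hasDerivAt_primitive_sub_two_mul_midpoint hF a_mem ⟨ha.trans_lt hab, hb⟩ hcont
    hmid).congr_of_eventuallyEq ?_
  filter_upwards [Ioo_mem_nhds hab hb] with x hx
  exact cellError_eq_primitive hF a_mem ⟨ha.trans hx.1.le, hx.2.le⟩ hx.1.le

theorem hasDerivAt_cellError_left (hF : MonotoneOn F (Icc l u)) (ha : l < a) (hab : a < b)
    (hb : b ≤ u) (hcont : ContinuousAt F a) (hmid : ContinuousAt F ((a + b) / 2)) :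
    HasDerivAt (fun x => cellError F x b) (F a - F ((a + b) / 2)) a := by
  have b_mem : b ∈ Icc l u := ⟨(ha.trans hab).le, hb⟩
  rw [add_comm a b] at hmid ⊢
  refine (hasDerivAt_primitive_sub_two_mul_midpoint hF b_mem ⟨ha, hab.trans_le hb⟩ hcont
    hmid).congr_of_eventuallyEq ?_
  filter_upwards [Ioo_mem_nhds ha hab] with x hx
  rw [cellError_eq_primitive hF ⟨hx.1.le, hx.2.le.trans hb⟩ b_mem hx.2.le, add_comm x b,
    add_comm (∫ ω in l..x, F ω)]

end CellError

section PinnedEndpoints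

variable {α : Type*} {N i : ℕ} {a b : α} {τ : ℕ → α}

theorem pinEndpoints_update (h0 : τ 0 = a) (hN : τ N = b) (hi : i ≠ 0) (hiN : i ≠ N)
    (x : α) : pinEndpoints N a b (update τ i x) = update τ i x := by
  funext k
  grind [pinEndpoints, update_apply]

theorem isLocalMin_update_of_pinEndpoints {β : Type*} [TopologicalSpace α] [Preorder β]
    {W : (ℕ → α) → β} (h0 : τ 0 = a) (hN : τ N = b) (hi : i ≠ 0) (hiN : i ≠ N)
    (hmin : IsLocalMin (fun σ => W (pinEndpoints N a b σ)) τ) :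
    IsLocalMin (fun x => W (update τ i x)) (τ i) := by
  have update_continuous : Continuous (update τ i) := continuous_const.update i continuous_id
  rw [← update_eq_self i τ] at hmin
  simpa only [comp_def, pinEndpoints_update h0 hN hi hiN] using
    hmin.comp_continuous update_continuous.continuousAt

end PinnedEndpoints

section Fractions

variable {F : ℝ → ℝ} {N n : ℕ} {τ : ℕ → ℝ}

theorem wassersteinError_update (hn : n + 1 < N) (x : ℝ) :
    wassersteinError F N (update τ (n + 1) x) =
      ∑ j ∈ Finset.range N \ {n, n + 1}, cellError F (τ j) (τ (j + 1)) +
        (cellError F (τ n) x + cellError F x (τ (n + 2))) := by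
  have pair_subset : {n, n + 1} ⊆ Finset.range N := by
    simp only [Finset.insert_subset_iff, Finset.singleton_subset_iff, Finset.mem_range]
    omega
  rw [wassersteinError, ← Finset.sum_sdiff pair_subset, Finset.sum_pair n.succ_ne_self.symm]
  congr 1
  · refine Finset.sum_congr rfl fun j hj => ?_
    simp only [Finset.mem_sdiff, Finset.mem_insert, Finset.mem_singleton] at hj
    rw [update_of_ne (by omega), update_of_ne (by omega)]
  · rw [update_self, update_of_ne (by omega), update_of_ne (by omega)]

theorem hasDerivAt_wassersteinError_update (hn : n + 1 < N)
    (hleft : τ n < τ (n + 1)) (hright : τ (n + 1) < τ (n + 2))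
    (hmono : MonotoneOn F (Icc (τ n) (τ (n + 2)))) (hcont : ContinuousAt F (τ (n + 1)))
    (hmid_left : ContinuousAt F ((τ n + τ (n + 1)) / 2))
    (hmid_right : ContinuousAt F ((τ (n + 1) + τ (n + 2)) / 2)) :
    HasDerivAt (fun x => wassersteinError F N (update τ (n + 1) x))
      (2 * F (τ (n + 1)) - F ((τ (n + 1) + τ (n + 2)) / 2) - F ((τ n + τ (n + 1)) / 2))
      (τ (n + 1)) := by
  simp only [wassersteinError_update hn]
  have left_cell := hasDerivAt_cellError_right hmono le_rfl hleft hright hcont hmid_left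
  have right_cell := hasDerivAt_cellError_left hmono hleft hright le_rfl hcont hmid_right
  exact ((left_cell.add right_cell).const_add _).congr_deriv (by ring)

theorem local_min_first_order_condition_general (hn : n + 1 < N)
    (hleft : τ n < τ (n + 1)) (hright : τ (n + 1) < τ (n + 2))
    (hmono : MonotoneOn F (Icc (τ n) (τ (n + 2)))) (hcont : ContinuousAt F (τ (n + 1)))
    (hmid_left : ContinuousAt F ((τ n + τ (n + 1)) / 2))
    (hmid_right : ContinuousAt F ((τ (n + 1) + τ (n + 2)) / 2))
    (hext : IsLocalExtr (fun x => wassersteinError F N (update τ (n + 1) x)) (τ (n + 1))) :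
    2 * F (τ (n + 1)) = F ((τ n + τ (n + 1)) / 2) + F ((τ (n + 1) + τ (n + 2)) / 2) := by
  have derivative_eq_zero := hext.hasDerivAt_eq_zero
    (hasDerivAt_wassersteinError_update hn hleft hright hmono hcont hmid_left hmid_right)
  linarith

end Fractions

/-- For a continuous, monotone non-decreasing `F : ℝ → ℝ` and `N ≥ 2`, if
`τ* = (τ₁*, ..., τ_{N-1}*)` with `0 < τ₁* < ... < τ_{N-1}* < 1` is a local minimum of
`W₁(τ₁, ..., τ_{N-1}) = ∑ i, ∫ ω in τ i..τ (i+1), |F ω - F ((τ i + τ (i+1))/2)|`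
(where `τ₀ = 0` and `τ_N = 1` are held fixed), then for every `1 ≤ i ≤ N - 1`,
`2 F (τ i*) = F ((τ (i-1)* + τ i*)/2) + F ((τ i* + τ (i+1)*)/2)`. -/
theorem local_min_first_order_condition
    (F : ℝ → ℝ) (hF : Continuous F) (hmono : Monotone F)
    (N : ℕ) (hN : 2 ≤ N) (τ : ℕ → ℝ) (h0 : τ 0 = 0) (h1 : τ N = 1)
    (hinc : ∀ j < N, τ j < τ (j + 1))
    (hmin : IsLocalMin
      (fun σ : ℕ → ℝ =>
        ∑ j ∈ Finset.range N,
          ∫ ω in (fun k => if k = 0 then (0 : ℝ) else if k = N then 1 else σ k) j..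
                 (fun k => if k = 0 then (0 : ℝ) else if k = N then 1 else σ k) (j + 1),
            |F ω - F (((fun k => if k = 0 then (0 : ℝ) else if k = N then 1 else σ k) j
                + (fun k => if k = 0 then (0 : ℝ) else if k = N then 1 else σ k) (j + 1)) / 2)|)
      τ)
    (i : ℕ) (hi1 : 1 ≤ i) (hi2 : i ≤ N - 1) :
    2 * F (τ i) = F ((τ (i - 1) + τ i) / 2) + F ((τ i + τ (i + 1)) / 2) := by
  obtain ⟨n, rfl⟩ := Nat.exists_eq_add_of_le' hi1
  exact local_min_first_order_condition_general (by omega) (hinc n (by omega))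
    (hinc (n + 1) (by omega)) (hmono.monotoneOn _) hF.continuousAt hF.continuousAt hF.continuousAt
    (.inl (isLocalMin_update_of_pinEndpoints (W := wassersteinError F N) h0 h1
      n.succ_ne_zero (by omega) hmin))
end
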